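/- arXiv:1106.0930 — 2 statements merged into one kernel-verified Lean document; each statement's English description precedes it below -/
import Mathlib

section
/- Let m be a positive integer, let L_m = E_{10}/mE_{10}, regarded as a module over ℤ/mℤ, and let V ⊆ L_m be a ℤ/mℤ-submodule that contains a submodule isomorphic as a ℤ/mℤ-module to (ℤ/mℤ)^8. Then there exists a root α ∈ E_{10} (i.e. α ∈ E_{10} with ⟨α,α⟩ = −2) whose image under the quotient map E_{10} → E_{10}/mE_{10} lies in V. -/
/-- The standard bilinear form on `ℤ^{1,n}`: `⟨x,y⟩ = x₀y₀ - ∑_{i=1}^n xᵢyᵢ`. -/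
def B {n : ℕ} (x y : Fin (n + 1) → ℤ) : ℤ :=
  x 0 * y 0 - ∑ i : Fin n, x i.succ * y i.succ

/-- The vector `k_n = -3e₀ + (e₁ + ⋯ + e_n)`. -/
def kv (n : ℕ) : Fin (n + 1) → ℤ := fun j => if j = 0 then -3 else 1

/-- The lattice `E_n = k_n^⊥` as a submodule of `ℤ^{1,n}`. -/
def En (n : ℕ) : Submodule ℤ (Fin (n + 1) → ℤ) where
  carrier := {x | B x (kv n) = 0}
  zero_mem' := by simp [B]
  add_mem' := by
    intro a b ha hb
    simp only [Set.mem_setOf_eq, B, Pi.add_apply, add_mul] at ha hb ⊢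
    rw [Finset.sum_add_distrib]
    linarith
  smul_mem' := by
    intro c x hx
    simp only [Set.mem_setOf_eq, B, Pi.smul_apply, smul_eq_mul, mul_assoc] at hx ⊢
    rw [← Finset.mul_sum, ← mul_sub, hx, mul_zero]

/-- The submodule `m·E₁₀` of `E₁₀`. -/
def mE (m : ℕ) : Submodule ℤ (En 10) :=
  LinearMap.range ((m : ℤ) • (LinearMap.id : En 10 →ₗ[ℤ] En 10))

/-!
Write `E₁₀ = E₈ ⊕ U` with `U` a hyperbolic plane, so that roots become solutions of
`q c - s * t = 1`, where `q` is half the positive definite even unimodular form of rank 8. Let `H`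
be the preimage of `V`; it contains all multiples of `m`.

Local solutions: modulo a prime `p ∣ m`, `H` has dimension at least 8, so it meets `E₈ / p` in
dimension at least 6. The polar form of `q` is nondegenerate modulo `p`, hence has rank at least
`2 * 6 - 8 = 4` on that subspace, and a form of rank at least 3 takes the value 1 at a vector not in
the radical. Hensel's lemma and the Chinese remainder theorem lift this to a solution modulo `m`
in `H`.

Exact solutions: changing `c` and `s` by multiples of `m`, one arranges `s ≠ 0` and then
`q c ≡ 1 + s * t` modulo `m * s`, one prime at a time: at `p ∣ m` by Hensel's lemma again, at
`p ∤ m` by moving `c` close to a root of `E₈`. It remains to add a multiple of `m` to `t`.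
-/

open QuadraticMap Module

section FiniteField

variable {F V : Type*} [Field F] [AddCommGroup V] [Module F V]

lemma not_anisotropic_of_three_le_finrank [Finite F] (Q : QuadraticForm F V)
    (hV : 3 ≤ finrank F V) : ¬ Q.Anisotropic := by
  classical
  have := Fintype.ofFinite F
  have : Module.Finite F V := finite_of_finrank_pos (by omega)
  obtain ⟨p, _⟩ := CharP.exists F
  obtain ⟨β, rfl⟩ := LinearMap.BilinMap.toQuadraticMap_surjective Q
  let b := finBasis F V
  let f : MvPolynomial (Fin (finrank F V)) F :=
    ∑ i, ∑ j, .X i * (.X j * .C (β (b j) (b i)))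
  have eval_f (c) : f.eval c = β (b.equivFun.symm c) (b.equivFun.symm c) := by
    simp [f, Basis.equivFun_symm_apply, LinearMap.sum_apply, Finset.mul_sum]
  have degree_f : f.totalDegree ≤ 2 := by
    refine MvPolynomial.IsHomogeneous.totalDegree_le <| .sum _ _ _ fun i _ ↦ .sum _ _ _ fun j _ ↦ ?_
    exact (MvPolynomial.isHomogeneous_X F i).mul
      ((MvPolynomial.isHomogeneous_X F j).mul (MvPolynomial.isHomogeneous_C _ (β (b j) (b i))))
  have p_dvd : p ∣ Fintype.card {c // f.eval c = 0} :=
    char_dvd_card_solutions p (by rw [Fintype.card_fin]; omega)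
  let trivialZero : {c // f.eval c = 0} := ⟨0, by rw [eval_f]; simp⟩
  have one_lt_card : 1 < Fintype.card {c // f.eval c = 0} :=
    (CharP.char_is_prime F p).one_lt.trans_le
      (Nat.le_of_dvd (Fintype.card_pos_iff.mpr ⟨trivialZero⟩) p_dvd)
  obtain ⟨⟨c, hc⟩, hne⟩ := Fintype.exists_ne_of_one_lt_card one_lt_card trivialZero
  refine (not_anisotropic_iff_exists _).mpr ⟨b.equivFun.symm c, ?_, (eval_f c).symm.trans hc⟩
  rw [LinearEquiv.map_ne_zero_iff]
  exact fun h ↦ hne (Subtype.ext h)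

-- An isotropic vector `x` outside the radical of the polar form pairs to `1` with some `y`, and
-- then `Q (y + (1 - Q y) • x) = 1`.
lemma exists_eq_one_and_polar_ne_zero [Finite F] (Q : QuadraticForm F V)
    (hQ : 3 ≤ finrank F Q.polarBilin.range) : ∃ z x, Q z = 1 ∧ polar Q z x ≠ 0 := by
  obtain ⟨C, hC⟩ := Q.polarBilin.ker.exists_isCompl
  have hC_rank : 3 ≤ finrank F C := by
    rwa [(Q.polarBilin.kerComplementEquivRange hC.symm).finrank_eq]
  obtain ⟨⟨x, hxC⟩, hx0, hQx⟩ := (not_anisotropic_iff_exists _).mp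
    (not_anisotropic_of_three_le_finrank (Q.comp C.subtype) hC_rank)
  replace hQx : Q x = 0 := hQx
  have hx_ker : x ∉ Q.polarBilin.ker := fun hx ↦
    hx0 <| Subtype.ext <| Submodule.disjoint_def.mp hC.disjoint x hx hxC
  obtain ⟨y, hxy⟩ : ∃ y, polar Q x y = 1 := by
    obtain ⟨y, hy⟩ := DFunLike.ne_iff.mp hx_ker
    exact ⟨(polar Q x y)⁻¹ • y, (polar_smul_right ..).trans (inv_mul_cancel₀ hy)⟩
  have hxx : polar Q x x = 0 := by rw [polar_self, hQx, smul_zero]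
  refine ⟨y + (1 - Q y) • x, x, ?_, ?_⟩
  · rw [QuadraticMap.map_add Q, QuadraticMap.map_smul, hQx, polar_smul_right, polar_comm, hxy]
    simp
  · rw [polar_add_left, polar_smul_left, hxx, polar_comm, hxy]
    simp

lemma two_mul_finrank_le_add_finrank_range_restrict [FiniteDimensional F V]
    {β : LinearMap.BilinForm F V} (hβ : β.Nondegenerate) (hrefl : β.IsRefl) (W : Submodule F V) :
    2 * finrank F W ≤ finrank F V + finrank F (β.restrict W).range := by
  have ker_le : (β.restrict W).ker.map W.subtype ≤ β.orthogonal W := by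
    rintro _ ⟨x, hx, rfl⟩ y hy
    exact hrefl _ _ (LinearMap.congr_fun hx ⟨y, hy⟩)
  have finrank_ker_le := Submodule.finrank_mono ker_le
  rw [Submodule.finrank_map_subtype_eq] at finrank_ker_le
  have := LinearMap.BilinForm.finrank_orthogonal hβ W
  have := (β.restrict W).finrank_range_add_finrank_ker
  have := W.finrank_le
  omega

lemma exists_mem_eq_one_and_polar_ne_zero [Finite F] [FiniteDimensional F V]
    {Q : QuadraticForm F V} (hQ : Q.polarBilin.Nondegenerate) {W : Submodule F V}
    (hW : finrank F V + 3 ≤ 2 * finrank F W) :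
    ∃ z ∈ W, ∃ x ∈ W, Q z = 1 ∧ polar Q z x ≠ 0 := by
  have hrefl : Q.polarBilin.IsRefl := fun x y h ↦ (polar_comm Q y x).trans h
  have finrank_range : 3 ≤ finrank F (LinearMap.BilinForm.restrict Q.polarBilin W).range := by
    have := two_mul_finrank_le_add_finrank_range_restrict hQ hrefl W
    omega
  obtain ⟨z, x, hz, hzx⟩ := exists_eq_one_and_polar_ne_zero (Q.comp W.subtype) finrank_range
  exact ⟨z, z.2, x, x.2, hz, hzx⟩

lemma finrank_le_finrank_comap_inl_add {V' : Type*} [AddCommGroup V'] [Module F V']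
    [FiniteDimensional F V] [FiniteDimensional F V'] (S : Submodule F (V × V')) :
    finrank F S ≤ finrank F (S.comap (LinearMap.inl F V V')) + finrank F V' := by
  let snd := (LinearMap.snd F V V').domRestrict S
  have ker_le : snd.ker.map S.subtype ≤
      (S.comap (LinearMap.inl F V V')).map (LinearMap.inl F V V') := by
    rintro _ ⟨⟨⟨v, v'⟩, hv⟩, rfl : v' = 0, rfl⟩
    exact ⟨v, hv, rfl⟩
  have finrank_ker_le := (Submodule.finrank_mono ker_le).trans (Submodule.finrank_map_le _ _)
  rw [Submodule.finrank_map_subtype_eq] at finrank_ker_le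
  have := snd.finrank_range_add_finrank_ker
  have := snd.range.finrank_le
  omega

end FiniteField

lemma exists_pow_dvd_quadratic {R : Type*} [CommRing R] {p b : R} (a c : R) (hb : IsCoprime b p)
    (k : ℕ) : ∃ y, p ^ k ∣ a + b * y + p * c * y ^ 2 := by
  obtain ⟨u, v, huv⟩ := hb
  induction k with
  | zero => exact ⟨0, by simp⟩
  | succ k ih =>
    obtain ⟨y, r, hr⟩ := ih
    refine ⟨y - p ^ k * (r * u), r * v + c * (p ^ k * (r * u) ^ 2 - 2 * y * (r * u)), ?_⟩
    linear_combination hr - p ^ k * r * huv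

lemma exists_mem_of_forall_prime_pow {M : Type*} [AddCommGroup M] (H : Submodule ℤ M)
    {P : ℕ → M → Prop} (add_smul : ∀ n x y, P n x → P n (x + (n : ℤ) • y))
    (mul : ∀ a b x, a.Coprime b → P a x → P b x → P (a * b) x) {m : ℕ} (hm : m ≠ 0)
    (prime_pow : ∀ p k, p.Prime → p ^ k ∣ m → ∃ x ∈ H, P (p ^ k) x) : ∃ x ∈ H, P m x := by
  induction m using Nat.recOnPrimeCoprime with
  | zero => exact absurd rfl hm
  | prime_pow p k hp => exact prime_pow p k hp dvd_rfl
  | coprime a b _ _ hab iha ihb =>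
    obtain ⟨x, hxH, hx⟩ := iha (left_ne_zero_of_mul hm) fun p k hp h ↦
      prime_pow p k hp (h.mul_right b)
    obtain ⟨y, hyH, hy⟩ := ihb (right_ne_zero_of_mul hm) fun p k hp h ↦
      prime_pow p k hp (h.mul_left a)
    obtain ⟨u, v, huv⟩ : IsCoprime (a : ℤ) b := Nat.isCoprime_iff_coprime.mpr hab
    have common : x + (a : ℤ) • u • (y - x) = y + (b : ℤ) • v • (x - y) := by
      linear_combination (norm := module) huv • (y - x)
    refine ⟨x + (a : ℤ) • u • (y - x), H.add_mem hxH ?_, mul a b _ hab (add_smul a x _ hx) ?_⟩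
    · exact H.smul_mem _ (H.smul_mem _ (H.sub_mem hyH hxH))
    · exact common ▸ add_smul b y _ hy

section QuadraticForm

variable {R M : Type*} [CommRing R] [AddCommGroup M] [Module R M]

lemma quadraticForm_add_smul (Q : QuadraticForm R M) (x y : M) (r : R) :
    Q (x + r • y) = Q x + r * polar Q x y + r ^ 2 * Q y := by
  rw [QuadraticMap.map_add Q, QuadraticMap.map_smul, polar_smul_right, smul_eq_mul, smul_eq_mul]
  ring

lemma exists_pow_dvd_quadraticForm_sub (Q : QuadraticForm R M) {p a : R} {z x : M}
    (hz : p ∣ Q z - a) (hzx : IsCoprime (polar Q z x) p) (k : ℕ) :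
    ∃ y : R, p ^ k ∣ Q (z + p • y • x) - a := by
  obtain ⟨d, hd⟩ := hz
  obtain ⟨y, hy⟩ := exists_pow_dvd_quadratic d (Q x) hzx k
  refine ⟨y, hy.trans ⟨p, ?_⟩⟩
  rw [smul_smul, quadraticForm_add_smul]
  linear_combination hd

/-- The orthogonal sum `(x, s, t) ↦ q x - s * t` of `q` and the negative of a hyperbolic plane. -/
def subHyperbolic (q : QuadraticForm R M) : QuadraticForm R (M × R × R) :=
  q.prod (-linMulLin (LinearMap.fst R R R) (LinearMap.snd R R R))

lemma subHyperbolic_apply (q : QuadraticForm R M) (x : M × R × R) :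
    subHyperbolic q x = q x.1 - x.2.1 * x.2.2 := by
  simp [subHyperbolic, sub_eq_add_neg]

lemma polar_subHyperbolic (q : QuadraticForm R M) (x y : M × R × R) :
    polar (subHyperbolic q) x y = polar q x.1 y.1 - (x.2.1 * y.2.2 + y.2.1 * x.2.2) := by
  simp only [polar, subHyperbolic_apply, Prod.fst_add, Prod.snd_add]
  ring

end QuadraticForm

lemma isCoprime_natCast_of_not_dvd {p : ℕ} (hp : p.Prime) {a : ℤ} (ha : ¬ (p : ℤ) ∣ a) :
    IsCoprime a p :=
  ((Nat.prime_iff_prime_int.mp hp).coprime_iff_not_dvd.mpr ha).symm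

section Integral

variable {M : Type*} [AddCommGroup M] (q : QuadraticForm ℤ M)

/-- `c` is primitive for the polar form of `q` modulo every prime divisor of `n`. -/
def PrimitiveMod (n : ℕ) (c : M) : Prop :=
  ∀ p : ℕ, p.Prime → p ∣ n → ∃ u, ¬ (p : ℤ) ∣ polar q c u

variable {q}

lemma PrimitiveMod.add_smul {n : ℕ} {c : M} (hc : PrimitiveMod q n c) (y : M) :
    PrimitiveMod q n (c + (n : ℤ) • y) := by
  intro p hp hpn
  obtain ⟨u, hu⟩ := hc p hp hpn
  refine ⟨u, ?_⟩
  rwa [polar_add_left, polar_smul_left, smul_eq_mul,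
    dvd_add_left ((Int.natCast_dvd_natCast.mpr hpn).mul_right _)]

lemma PrimitiveMod.mul {a b : ℕ} {c : M} (ha : PrimitiveMod q a c) (hb : PrimitiveMod q b c) :
    PrimitiveMod q (a * b) c :=
  fun p hp hpab ↦ (hp.dvd_mul.mp hpab).elim (ha p hp) (hb p hp)

lemma exists_prime_pow_dvd_of_not_dvd_polar {p m : ℕ} (hp : p.Prime) (hpm : p ∣ m) {c u : M}
    (hu : ¬ (p : ℤ) ∣ polar q c u) (d : ℤ) (k : ℕ) :
    ∃ v, (p : ℤ) ^ k ∣ d + polar q c v + m * q v := by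
  obtain ⟨m', rfl⟩ := hpm
  obtain ⟨y, hy⟩ :=
    exists_pow_dvd_quadratic d (m' * q u) (isCoprime_natCast_of_not_dvd hp hu) k
  refine ⟨y • u, hy.trans (dvd_of_eq ?_)⟩
  rw [polar_smul_right, QuadraticMap.map_smul, smul_eq_mul, smul_eq_mul]
  push_cast
  ring

lemma exists_dvd_of_isCoprime {m n d s t : ℤ} (hmn : IsCoprime m n) (hns : n ∣ s) {c r : M}
    (hr : q r = 1) (hqc : q c = 1 + s * t + m * d) :
    ∃ v, n ∣ d + polar q c v + m * q v := by
  obtain ⟨e, f, hef⟩ := id hmn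
  refine ⟨e • (r - c), hmn.symm.dvd_of_dvd_mul_left ?_⟩
  have modify_eq : c + m • e • (r - c) = r + n • f • (c - r) := by
    linear_combination (norm := module) hef • (r - c)
  have q_eq := congrArg q modify_eq
  rw [quadraticForm_add_smul, quadraticForm_add_smul, hr, hqc] at q_eq
  obtain ⟨s', rfl⟩ := hns
  exact ⟨polar q r (f • (c - r)) + n * q (f • (c - r)) - s' * t, by linear_combination q_eq⟩

-- Modulo a power of `p ∣ m` the primitivity of `c` makes this a Hensel problem; modulo a power of
-- `p ∤ m` one may choose `u` with `c + m • u ≡ r`.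
lemma exists_dvd_add_polar_add {m : ℕ} {c r : M} (hc : PrimitiveMod q m c) (hr : q r = 1)
    {d s t : ℤ} (hs : s ≠ 0) (hqc : q c = 1 + s * t + m * d) :
    ∃ u, s ∣ d + polar q c u + m * q u := by
  let P (n : ℕ) (u : M) : Prop := (n : ℤ) ∣ d + polar q c u + m * q u
  have add_smul (n : ℕ) (u y : M) (hu : P n u) : P n (u + (n : ℤ) • y) := by
    obtain ⟨e, he⟩ := hu
    refine ⟨e + polar q c y + m * (polar q u y + n * q y), ?_⟩
    rw [polar_add_right, polar_smul_right, quadraticForm_add_smul, smul_eq_mul]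
    linear_combination he
  have mul (a b : ℕ) (u : M) (hab : a.Coprime b) (ha : P a u) (hb : P b u) : P (a * b) u := by
    simpa only [P, Nat.cast_mul] using (Nat.isCoprime_iff_coprime.mpr hab).mul_dvd ha hb
  have prime_pow (p k : ℕ) (hp : p.Prime) (hpk : p ^ k ∣ s.natAbs) :
      ∃ u ∈ (⊤ : Submodule ℤ M), P (p ^ k) u := by
    simp only [P, Nat.cast_pow, Submodule.mem_top, true_and]
    by_cases hpm : p ∣ m
    · obtain ⟨u, hu⟩ := hc p hp hpm
      exact exists_prime_pow_dvd_of_not_dvd_polar hp hpm hu d k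
    · refine exists_dvd_of_isCoprime (IsCoprime.pow_right ?_) ?_ hr hqc
      · exact isCoprime_natCast_of_not_dvd hp (mt Int.natCast_dvd_natCast.mp hpm)
      · exact_mod_cast Int.natCast_dvd.mpr hpk
  obtain ⟨u, -, hu⟩ :=
    exists_mem_of_forall_prime_pow ⊤ add_smul mul (Int.natAbs_ne_zero.mpr hs) prime_pow
  exact ⟨u, Int.natAbs_dvd.mp hu⟩

/-- `x` solves `subHyperbolic q x = 1` modulo `n`, with a primitive component in `M`. -/
def IsPrimitiveSolutionMod (q : QuadraticForm ℤ M) (n : ℕ) (x : M × ℤ × ℤ) : Prop :=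
  (n : ℤ) ∣ subHyperbolic q x - 1 ∧ PrimitiveMod q n x.1

lemma isPrimitiveSolutionMod_one (x : M × ℤ × ℤ) : IsPrimitiveSolutionMod q 1 x :=
  ⟨by simp, fun _ hp hp_one ↦ absurd hp_one hp.not_dvd_one⟩

lemma IsPrimitiveSolutionMod.add_smul {n : ℕ} {x : M × ℤ × ℤ} (hx : IsPrimitiveSolutionMod q n x)
    (y : M × ℤ × ℤ) : IsPrimitiveSolutionMod q n (x + (n : ℤ) • y) := by
  refine ⟨?_, hx.2.add_smul y.1⟩
  obtain ⟨d, hd⟩ := hx.1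
  refine ⟨d + polar (subHyperbolic q) x y + n * subHyperbolic q y, ?_⟩
  rw [quadraticForm_add_smul]
  linear_combination hd

lemma IsPrimitiveSolutionMod.mul {a b : ℕ} (hab : a.Coprime b) {x : M × ℤ × ℤ}
    (ha : IsPrimitiveSolutionMod q a x) (hb : IsPrimitiveSolutionMod q b x) :
    IsPrimitiveSolutionMod q (a * b) x := by
  refine ⟨?_, ha.2.mul hb.2⟩
  simpa only [Nat.cast_mul] using (Nat.isCoprime_iff_coprime.mpr hab).mul_dvd ha.1 hb.1

lemma exists_isPrimitiveSolutionMod_pow {p : ℕ} (hp : p.Prime) {H : Submodule ℤ (M × ℤ × ℤ)}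
    {z x : M × ℤ × ℤ} (hz : z ∈ H) (hx : x ∈ H) (hzp : IsPrimitiveSolutionMod q p z)
    (hzx : ¬ (p : ℤ) ∣ polar (subHyperbolic q) z x) (k : ℕ) :
    ∃ y ∈ H, IsPrimitiveSolutionMod q (p ^ k) y := by
  obtain ⟨e, he⟩ := exists_pow_dvd_quadraticForm_sub (subHyperbolic q) hzp.1
    (isCoprime_natCast_of_not_dvd hp hzx) k
  refine ⟨z + (p : ℤ) • e • x, H.add_mem hz (H.smul_mem _ (H.smul_mem _ hx)), ?_, ?_⟩
  · exact_mod_cast he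
  · intro l hl hlp
    obtain rfl := (Nat.prime_dvd_prime_iff_eq hl hp).mp (hl.dvd_of_dvd_pow hlp)
    exact hzp.2.add_smul _ l hl dvd_rfl

-- The first hyperbolic coordinate is moved within its class to a nonzero `s`, then the component in
-- `M` to one where the error `d + …` is divisible by `s`; the second hyperbolic coordinate absorbs
-- the error.
lemma exists_mem_subHyperbolic_eq_one {m : ℕ} (hm : m ≠ 0) {H : Submodule ℤ (M × ℤ × ℤ)}
    (hmH : ∀ x, (m : ℤ) • x ∈ H) {r : M} (hr : q r = 1) {x : M × ℤ × ℤ} (hxH : x ∈ H)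
    (hx : IsPrimitiveSolutionMod q m x) : ∃ y ∈ H, subHyperbolic q y = 1 := by
  obtain ⟨c, s, t⟩ := x
  obtain ⟨⟨d, hd⟩, hc⟩ := hx
  simp only [subHyperbolic_apply] at hd hc
  obtain ⟨e, hs⟩ : ∃ e : ℤ, s + m * e ≠ 0 := by
    by_cases h : s = 0
    · exact ⟨1, by simpa [h] using hm⟩
    · exact ⟨0, by simpa using h⟩
  obtain ⟨u, f, hf⟩ := exists_dvd_add_polar_add hc hr (d := d - e * t) (t := t) hs
    (by linear_combination hd)
  refine ⟨(c, s, t) + (m : ℤ) • (u, e, f), H.add_mem hxH (hmH _), ?_⟩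
  rw [subHyperbolic_apply]
  simp only [Prod.fst_add, Prod.snd_add, Prod.smul_fst, Prod.smul_snd, quadraticForm_add_smul,
    smul_eq_mul]
  linear_combination hd + m * hf

end Integral

section Reduction

variable {n : Type*} (p : ℕ)

/-- Coordinatewise reduction modulo `p` on the coordinate lattice carrying `subHyperbolic`. -/
def reduceMod : (n → ℤ) × ℤ × ℤ →+ (n → ZMod p) × ZMod p × ZMod p :=
  ((Int.castAddHom (ZMod p)).compLeft n).prodMap
    ((Int.castAddHom (ZMod p)).prodMap (Int.castAddHom (ZMod p)))

/-- The image modulo `p` of a submodule of the lattice, as a `ZMod p`-submodule. -/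
def reduction (H : Submodule ℤ ((n → ℤ) × ℤ × ℤ)) :
    Submodule (ZMod p) ((n → ZMod p) × ZMod p × ZMod p) :=
  (H.toAddSubgroup.map (reduceMod p)).toZModSubmodule p

variable {p}

lemma reduceMod_eq_zero_iff {x : (n → ℤ) × ℤ × ℤ} : reduceMod p x = 0 ↔ ∃ y, x = (p : ℤ) • y := by
  constructor
  · intro hx
    simp only [reduceMod, Prod.ext_iff, funext_iff, AddMonoidHom.prodMap_def,
      AddMonoidHom.prod_apply, AddMonoidHom.comp_apply, AddMonoidHom.compLeft_apply,
      AddMonoidHom.coe_fst, AddMonoidHom.coe_snd, Function.comp_apply, Int.coe_castAddHom,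
      Prod.fst_zero, Prod.snd_zero, Pi.zero_apply, ZMod.intCast_zmod_eq_zero_iff_dvd] at hx
    obtain ⟨hc, ⟨s, hs⟩, t, ht⟩ := hx
    choose c hc using hc
    exact ⟨(c, s, t), Prod.ext (funext hc) (Prod.ext hs ht)⟩
  · rintro ⟨y, rfl⟩
    rw [map_zsmul]
    ext <;> simp

lemma card_le_finrank_reduction_comap [Finite n] {Q ι : Type*} [AddCommGroup Q] [Fintype ι]
    {m : ℕ} (hm : m ≠ 0) {g : (n → ℤ) × ℤ × ℤ →ₗ[ℤ] Q} (hg : Function.Surjective g)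
    (hmg : ∀ x, g ((m : ℤ) • x) = 0) {f : (ι → ZMod m) →ₗ[ℤ] Q} (hf : Function.Injective f)
    {V : Submodule ℤ Q} (hfV : LinearMap.range f ≤ V) [Fact p.Prime] (hpm : p ∣ m) :
    Fintype.card ι ≤ finrank (ZMod p) (reduction p (V.comap g)) := by
  classical
  choose w hw using fun i : ι ↦ hg (f (Pi.single i 1))
  have hwV (i : ι) : w i ∈ V.comap g := hfV ⟨_, (hw i).symm⟩
  have map_intCast (c : ι → ℤ) : f (fun i ↦ (c i : ZMod m)) = g (∑ i, c i • w i) := by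
    simp only [map_sum, map_zsmul, hw]
    simp only [← map_zsmul, ← map_sum]
    exact congrArg f (funext fun j ↦ by simp [Finset.sum_apply, Pi.single_apply])
  have linearIndependent : LinearIndependent (ZMod p) fun i ↦
      (⟨reduceMod p (w i), w i, hwV i, rfl⟩ : reduction p (V.comap g)) := by
    refine .of_comp (reduction p (V.comap g)).subtype (Fintype.linearIndependent_iff.mpr ?_)
    intro c hc i
    obtain ⟨c, rfl⟩ := ZMod.intCast_surjective.comp_left c
    obtain ⟨y, hy⟩ : ∃ y, ∑ i, c i • w i = (p : ℤ) • y := by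
      rw [← reduceMod_eq_zero_iff, ← hc]
      simp only [map_sum, map_zsmul]
      exact Finset.sum_congr rfl fun i _ ↦ (Int.cast_smul_eq_zsmul (ZMod p) (c i) _).symm
    obtain ⟨k, rfl⟩ := hpm
    have f_eq_zero : f (fun i ↦ ((k * c i : ℤ) : ZMod (p * k))) = 0 := by
      rw [map_intCast, ← hmg y]
      simp only [← smul_smul, ← Finset.smul_sum, hy]
      rw [smul_smul, Nat.cast_mul, mul_comm]
    have hk : (k : ℤ) ≠ 0 := Nat.cast_ne_zero.mpr (right_ne_zero_of_mul hm)
    have dvd := congrFun (hf (f_eq_zero.trans (map_zero f).symm)) i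
    rw [Pi.zero_apply, ZMod.intCast_zmod_eq_zero_iff_dvd, Nat.cast_mul, mul_comm,
      mul_dvd_mul_iff_left hk] at dvd
    exact (ZMod.intCast_zmod_eq_zero_iff_dvd (c i) p).mpr dvd
  exact linearIndependent.fintype_card_le_finrank

variable [Fintype n] [DecidableEq n]

lemma toQuadraticForm'_map {R S : Type*} [CommRing R] [CommRing S] (g : R →+* S)
    (A : Matrix n n R) (x : n → R) :
    (A.map g).toQuadraticForm' (g ∘ x) = g (A.toQuadraticForm' x) := by
  have map_mulVec : (A.map g).mulVec (g ∘ x) = g ∘ A.mulVec x :=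
    funext fun i ↦ (g.map_mulVec A x i).symm
  simp only [Matrix.toQuadraticForm', LinearMap.BilinMap.toQuadraticMap_apply,
    Matrix.toLinearMap₂'_apply', RingHom.map_dotProduct, map_mulVec]

lemma polar_toQuadraticForm'_map {R S : Type*} [CommRing R] [CommRing S] (g : R →+* S)
    (A : Matrix n n R) (x y : n → R) :
    polar (A.map g).toQuadraticForm' (g ∘ x) (g ∘ y) = g (polar A.toQuadraticForm' x y) := by
  have comp_add : g ∘ x + g ∘ y = g ∘ (x + y) := funext fun i ↦ (map_add g _ _).symm
  simp only [polar, comp_add, toQuadraticForm'_map, map_sub]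

lemma polarBilin_toQuadraticForm' {R : Type*} [CommRing R] (A : Matrix n n R) :
    A.toQuadraticForm'.polarBilin = (A + A.transpose).toBilin' := by
  rw [Matrix.toQuadraticForm', LinearMap.BilinMap.polarBilin_toQuadraticMap]
  refine LinearMap.ext₂ fun x y ↦ ?_
  simp [Matrix.toBilin'_apply', Matrix.toLinearMap₂'_apply', Matrix.mulVec_transpose,
    dotProduct_comm x, Matrix.dotProduct_mulVec]

-- `7 = 3 + 2 * 2`: the polar form must keep rank `3` on the vectors of `reduction p H` without
-- hyperbolic component, and passing to those vectors loses at most two dimensions.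
lemma exists_mem_isPrimitiveSolutionMod_prime [Fact p.Prime] {A : Matrix n n ℤ}
    (hA : ¬ (p : ℤ) ∣ (A + A.transpose).det) {H : Submodule ℤ ((n → ℤ) × ℤ × ℤ)}
    (hH : Fintype.card n + 7 ≤ 2 * finrank (ZMod p) (reduction p H)) :
    ∃ z ∈ H, ∃ x ∈ H, IsPrimitiveSolutionMod A.toQuadraticForm' p z ∧
      ¬ (p : ℤ) ∣ polar (subHyperbolic A.toQuadraticForm') z x := by
  let g := Int.castRingHom (ZMod p)
  have nondegenerate : (A.map g).toQuadraticForm'.polarBilin.Nondegenerate := by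
    rw [polarBilin_toQuadraticForm']
    refine LinearMap.BilinForm.nondegenerate_toBilin'_of_det_ne_zero' _ ?_
    rwa [← Matrix.transpose_map, ← Matrix.map_add _ (map_add g), ← RingHom.mapMatrix_apply,
      ← RingHom.map_det, eq_intCast, Ne, ZMod.intCast_zmod_eq_zero_iff_dvd]
  have finrank_comap := finrank_le_finrank_comap_inl_add (reduction p H)
  rw [finrank_prod, finrank_self] at finrank_comap
  obtain ⟨_, ⟨⟨c, s, t⟩, hzH, hz⟩, _, ⟨⟨d, s', t'⟩, hxH, hx⟩, hz_one, hzx⟩ :=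
    exists_mem_eq_one_and_polar_ne_zero nondegenerate
      (W := (reduction p H).comap (LinearMap.inl ..)) (by rw [finrank_fintype_fun_eq_card]; omega)
  obtain ⟨rfl, hs, ht⟩ : g ∘ c = _ ∧ (s : ZMod p) = 0 ∧ (t : ZMod p) = 0 :=
    ⟨congrArg Prod.fst hz, Prod.ext_iff.mp (congrArg Prod.snd hz)⟩
  obtain ⟨rfl, hs', ht'⟩ : g ∘ d = _ ∧ (s' : ZMod p) = 0 ∧ (t' : ZMod p) = 0 :=
    ⟨congrArg Prod.fst hx, Prod.ext_iff.mp (congrArg Prod.snd hx)⟩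
  rw [toQuadraticForm'_map, eq_intCast] at hz_one
  rw [polar_toQuadraticForm'_map, eq_intCast] at hzx
  refine ⟨_, hzH, _, hxH, ⟨?_, ?_⟩, ?_⟩
  · rw [← ZMod.intCast_zmod_eq_zero_iff_dvd, subHyperbolic_apply]
    push_cast
    rw [hz_one, hs]
    ring
  · intro l hl hlp
    obtain rfl := (Nat.prime_dvd_prime_iff_eq hl Fact.out).mp hlp
    exact ⟨d, by rwa [← ZMod.intCast_zmod_eq_zero_iff_dvd]⟩
  · rw [← ZMod.intCast_zmod_eq_zero_iff_dvd, polar_subHyperbolic]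
    push_cast
    rwa [hs, hs', zero_mul, zero_mul, add_zero, sub_zero]

theorem exists_mem_subHyperbolic_toQuadraticForm'_eq_one {A : Matrix n n ℤ} {m : ℕ} (hm : m ≠ 0)
    (hA : IsCoprime (A + A.transpose).det m) {r : n → ℤ} (hr : A.toQuadraticForm' r = 1)
    {H : Submodule ℤ ((n → ℤ) × ℤ × ℤ)} (hmH : ∀ x, (m : ℤ) • x ∈ H)
    (hH : ∀ p : ℕ, p.Prime → p ∣ m →
      Fintype.card n + 7 ≤ 2 * finrank (ZMod p) (reduction p H)) :
    ∃ x ∈ H, subHyperbolic A.toQuadraticForm' x = 1 := by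
  obtain ⟨x, hxH, hx⟩ := exists_mem_of_forall_prime_pow H
    (P := IsPrimitiveSolutionMod A.toQuadraticForm') (fun _ _ y hx ↦ hx.add_smul y)
    (fun _ _ _ hab ha hb ↦ ha.mul hab hb) hm fun p k hp hpm ↦ by
      obtain rfl | hk := eq_or_ne k 0
      · exact ⟨0, H.zero_mem, isPrimitiveSolutionMod_one 0⟩
      have hpm : p ∣ m := (dvd_pow_self p hk).trans hpm
      have := Fact.mk hp
      have hpA : ¬ (p : ℤ) ∣ (A + A.transpose).det := fun h ↦
        (Nat.prime_iff_prime_int.mp hp).not_dvd_one <|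
          isUnit_iff_dvd_one.mp <| hA.isUnit_of_dvd' h (Int.natCast_dvd_natCast.mpr hpm)
      obtain ⟨z, hz, x, hx, hzp, hzx⟩ := exists_mem_isPrimitiveSolutionMod_prime hpA (hH p hp hpm)
      exact exists_isPrimitiveSolutionMod_pow hp hz hx hzp hzx k
  exact exists_mem_subHyperbolic_eq_one hm hmH hr hxH hx

end Reduction

section E10

/-- The form `-⟨x, x⟩ / 2` on `E₈ = k₈^⊥`, as an upper triangular matrix in the coordinates
`x₀, …, x₇`, where `x₈ = -(3 x₀ + x₁ + ⋯ + x₇)`. -/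
def e8Matrix : Matrix (Fin 8) (Fin 8) ℤ :=
  .of fun i j ↦ if j < i then 0 else if i = 0 then if j = 0 then 4 else 3 else 1

-- The matrix is `D + w wᵀ` with `D = diag(-1, 1, …, 1)` and `w = (3, 1, …, 1)`. Since
-- `wᵀ D w = -2`, the Sherman-Morrison formula gives the inverse `D + (D w) (D w)ᵀ`.
lemma isUnit_det_e8Matrix_add_transpose : IsUnit (e8Matrix + e8Matrix.transpose).det :=
  Matrix.isUnit_det_of_right_inverse (B := .of fun i j ↦
    (if i = j then if i = 0 then -1 else 1 else 0) + kv 7 i * kv 7 j) (by decide)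

lemma two_mul_toQuadraticForm'_e8Matrix (c : Fin 8 → ℤ) :
    2 * e8Matrix.toQuadraticForm' c = -c 0 ^ 2 + c 1 ^ 2 + c 2 ^ 2 + c 3 ^ 2 + c 4 ^ 2 + c 5 ^ 2 +
      c 6 ^ 2 + c 7 ^ 2 + (3 * c 0 + c 1 + c 2 + c 3 + c 4 + c 5 + c 6 + c 7) ^ 2 := by
  simp [Matrix.toQuadraticForm', Matrix.toLinearMap₂'_apply', e8Matrix, Matrix.mulVec, dotProduct,
    Fin.sum_univ_succ]
  ring

lemma mem_En_ten_iff (x : Fin 11 → ℤ) : x ∈ En 10 ↔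
    3 * x 0 + x 1 + x 2 + x 3 + x 4 + x 5 + x 6 + x 7 + x 8 + x 9 + x 10 = 0 := by
  have B_kv : B x (kv 10) =
      -(3 * x 0 + x 1 + x 2 + x 3 + x 4 + x 5 + x 6 + x 7 + x 8 + x 9 + x 10) := by
    simp [B, kv, Fin.sum_univ_succ]
    ring
  exact (congrArg (· = 0) B_kv).to_iff.trans neg_eq_zero

/-- The isomorphism `E₁₀ ≅ E₈ ⊕ U`, where the hyperbolic plane `U` has the isotropic basis
`e₉ - k₁₀`, `e₁₀ - k₁₀`. -/
def enTenEquiv : En 10 ≃ₗ[ℤ] (Fin 8 → ℤ) × ℤ × ℤ where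
  toFun x := (fun i ↦ x.1 (i.castLE (by omega)) - (x.1 9 + x.1 10) * kv 7 i, -x.1 10, -x.1 9)
  invFun := fun (c, s, t) ↦
    ⟨![c 0, c 1, c 2, c 3, c 4, c 5, c 6, c 7,
        -(3 * c 0 + c 1 + c 2 + c 3 + c 4 + c 5 + c 6 + c 7), s, t] - (s + t) • kv 10, by
      rw [mem_En_ten_iff]
      simp [kv]
      ring⟩
  map_add' x y := by
    ext <;> simp <;> ring
  map_smul' r x := by
    ext <;> simp; ring
  left_inv x := by
    have := (mem_En_ten_iff x).mp x.2
    ext i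
    fin_cases i <;> simp [kv, Fin.castLE] <;> linarith
  right_inv y := by
    ext i
    · fin_cases i <;> simp [kv, Fin.castLE] <;> ring
    · simp [kv]
    · simp [kv]

lemma B_self_eq (x : En 10) :
    B x.1 x.1 = -2 * subHyperbolic e8Matrix.toQuadraticForm' (enTenEquiv x) := by
  have mem := (mem_En_ten_iff x).mp x.2
  rw [subHyperbolic_apply, mul_sub, neg_mul, two_mul_toQuadraticForm'_e8Matrix]
  simp [enTenEquiv, B, kv, Fin.castLE, Fin.sum_univ_succ]
  linear_combination (3 * x.1 0 + x.1 1 + x.1 2 + x.1 3 + x.1 4 + x.1 5 + x.1 6 + x.1 7 - x.1 8 +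
    x.1 9 + x.1 10) * mem

end E10

/-- if `V` is a `ℤ/mℤ`-submodule of `L_m = E₁₀/mE₁₀` containing a submodule
isomorphic to `(ℤ/mℤ)^8`, then some root of `E₁₀` maps into `V`. -/
theorem exists_root_mapping_into_submodule (m : ℕ) (hm : 0 < m)
    (V : Submodule ℤ ((En 10) ⧸ mE m))
    (f : (Fin 8 → ZMod m) →ₗ[ℤ] (En 10) ⧸ mE m)
    (hf : Function.Injective f)
    (hfV : LinearMap.range f ≤ V) :
    ∃ α : En 10, B (α : Fin 11 → ℤ) (α : Fin 11 → ℤ) = -2 ∧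
      (Submodule.Quotient.mk α : (En 10) ⧸ mE m) ∈ V := by
  let g := (mE m).mkQ ∘ₗ enTenEquiv.symm.toLinearMap
  have hg : Function.Surjective g := (mE m).mkQ_surjective.comp enTenEquiv.symm.surjective
  have hmg (x) : g ((m : ℤ) • x) = 0 := by
    rw [map_zsmul]
    exact (Submodule.Quotient.mk_eq_zero _).mpr ⟨enTenEquiv.symm x, rfl⟩
  obtain ⟨x, hxV, hx⟩ := exists_mem_subHyperbolic_toQuadraticForm'_eq_one hm.ne'
    (isCoprime_one_left.of_isCoprime_of_dvd_left isUnit_det_e8Matrix_add_transpose.dvd)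
    (r := Pi.single 1 1) (A := e8Matrix) (by decide) (H := V.comap g)
    (fun x ↦ V.mem_comap.mpr <| hmg x ▸ V.zero_mem) fun p hp hpm ↦ by
      have := Fact.mk hp
      have := card_le_finrank_reduction_comap hm.ne' hg hmg hf hfV hpm
      rw [Fintype.card_fin] at this ⊢
      omega
  refine ⟨enTenEquiv.symm x, ?_, hxV⟩
  rw [B_self_eq, LinearEquiv.apply_symm_apply, hx]
  rfl
end

section
/- Let p be a prime and k ≥ 1 an integer, and let M be a ℤ/p^kℤ-submodule of E_{10}/p^kE_{10} that contains a submodule isomorphic as a ℤ/p^kℤ-module to (ℤ/p^kℤ)^8. Then M represents all invertible elements of ℤ/p^kℤ: for every unit a of ℤ/p^kℤ there exists x ∈ E_{10} whose image in E_{10}/p^kE_{10} lies in M and such that (1/2)⟨x,x⟩ ≡ a (mod p^k). (Here (1/2)⟨x,x⟩ is an integer, since ⟨x,x⟩ is even for every x ∈ E_{10}.) -/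
/-!
In the orthogonal basis of `ℤ^{1,10}` the form has determinant `±1`, and `E₁₀ = k^⊥` is
primitive, so an embedding of `(ℤ/p^k)^r` into `E₁₀/p^k E₁₀` yields lifts `w₁, …, w_r ∈ E₁₀`
whose coordinates are still linearly independent modulo `p`. By Sylvester's rank inequality
their Gram matrix has rank at least `2r - 11` modulo `p`, which is at least `3` once `r ≥ 7`.
Chevalley–Warning then gives a combination `x` of the `wᵢ` that is isotropic modulo `p` for the
form `½⟨x, x⟩` but not in its radical. Choosing `y` with `⟨x, y⟩` a unit, the quadratic
polynomial `t ↦ ½⟨y + tx, y + tx⟩` has unit linear and nilpotent quadratic coefficient, so by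
Newton iteration it takes every value modulo `p^k`.

The half-norm is written `c ↦ cᵀ A c` with `A + Aᵀ` the Gram matrix, which also covers `p = 2`.
-/

open Matrix IsLocalRing

section Rings

theorem exists_quadratic_root {R : Type*} [CommRing R] {b c : R}
    (hb : IsUnit b) (hc : IsNilpotent c) (a : R) : ∃ t, a + b * t + c * t ^ 2 = 0 := by
  obtain ⟨u, rfl⟩ := hb
  let P : Polynomial R := .C a + .C (u : R) * .X + .C c * .X ^ 2
  have aeval_P (t : R) : Polynomial.aeval t P = a + u * t + c * t ^ 2 := by simp [P]
  have hroot : Polynomial.aeval (-(↑u⁻¹ * a)) P = (↑u⁻¹ * a) ^ 2 * c := by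
    rw [aeval_P]
    linear_combination -a * u.mul_inv
  have hderiv : Polynomial.aeval (-(↑u⁻¹ * a)) P.derivative = u + -2 * (↑u⁻¹ * a) * c := by
    have hP : P.derivative = .C (u : R) + .C c * (.C 2 * .X) := by
      simp [P, one_add_one_eq_two]
    simp only [hP, map_add, map_mul, Polynomial.aeval_C, Polynomial.aeval_X,
      Algebra.algebraMap_self, RingHom.id_apply]
    ring
  have hmul (d : R) : IsNilpotent (d * c) := (Commute.all d c).isNilpotent_mul_left hc
  obtain ⟨t, ⟨-, ht⟩, -⟩ := P.existsUnique_nilpotent_sub_and_aeval_eq_zero (hroot ▸ hmul _)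
    (hderiv ▸ (hmul _).isUnit_add_left_of_commute u.isUnit (Commute.all _ _))
  exact ⟨t, by rw [← aeval_P, ht]⟩

theorem exists_ne_zero_forall_mem_maximalIdeal_mul_eq_zero (R : Type*) [CommRing R]
    [IsLocalRing R] [IsArtinianRing R] : ∃ s : R, s ≠ 0 ∧ ∀ r ∈ maximalIdeal R, s * r = 0 := by
  obtain ⟨I, hI⟩ := associatedPrimes.nonempty R R
  obtain ⟨hprime, s, rfl⟩ := isAssociatedPrime_iff.1 hI
  rw [← eq_maximalIdeal hprime.isMaximal']
  refine ⟨s, fun hs => hprime.ne_top ?_, fun r hr => ?_⟩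
  · simp [hs]
  · simpa [Submodule.mem_colon_singleton, mul_comm] using hr

theorem isLocalRing_zmod_prime_pow {p k : ℕ} (hp : p.Prime) (hk : k ≠ 0) :
    IsLocalRing (ZMod (p ^ k)) :=
  have : Fact p.Prime := ⟨hp⟩
  have : Fact (1 < p ^ k) := ⟨Nat.one_lt_pow hk hp.one_lt⟩
  .of_surjective' (PadicInt.toZModPow k) (ZMod.ringHom_surjective _)

end Rings

section FiniteField

variable {K ι : Type*} [Field K] [Fintype ι]

theorem exists_ne_zero_dotProduct_mulVec_self_eq_zero [Finite K] (A : Matrix ι ι K)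
    (hι : 3 ≤ Fintype.card ι) : ∃ x ≠ 0, x ⬝ᵥ A *ᵥ x = 0 := by
  classical
  cases nonempty_fintype K
  obtain ⟨p, _⟩ := CharP.exists K
  let P : MvPolynomial ι K := ∑ i, .X i * A.toMvPolynomial i
  have eval_P (x : ι → K) : P.eval x = x ⬝ᵥ A *ᵥ x := by
    simp [P, dotProduct, toMvPolynomial_eval_eq_apply]
  have hdeg : P.totalDegree ≤ 2 := MvPolynomial.totalDegree_finsetSum_le fun i _ =>
    (MvPolynomial.totalDegree_mul _ _).trans <|
      add_le_add (MvPolynomial.totalDegree_X i).le (A.toMvPolynomial_totalDegree_le i)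
  have hdvd := char_dvd_card_solutions p (f := P) (hdeg.trans_lt hι)
  let zero : {x // P.eval x = 0} := ⟨0, by rw [eval_P, zero_dotProduct]⟩
  have hcard := (CharP.char_is_prime K p).one_lt.trans_le
    (Nat.le_of_dvd (Fintype.card_pos_iff.2 ⟨zero⟩) hdvd)
  obtain ⟨⟨x, hx⟩, hx0⟩ := Fintype.exists_ne_of_one_lt_card hcard zero
  exact ⟨x, fun h => hx0 (Subtype.ext h), eval_P x ▸ hx⟩

theorem exists_isotropic_of_three_le_rank [Finite K] (A : Matrix ι ι K)
    (hA : 3 ≤ (A + Aᵀ).rank) : ∃ x, x ⬝ᵥ A *ᵥ x = 0 ∧ (A + Aᵀ) *ᵥ x ≠ 0 := by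
  obtain ⟨v, hv⟩ := exists_linearIndependent_of_le_finrank hA
  obtain ⟨N, hN⟩ : ∃ N : Matrix (Fin 3) ι K, ∀ i, (A + Aᵀ) *ᵥ N i = v i :=
    Classical.axiom_of_choice fun i => (v i).2
  obtain ⟨y, hy0, hy⟩ := exists_ne_zero_dotProduct_mulVec_self_eq_zero (N * A * Nᵀ) (by simp)
  refine ⟨y ᵥ* N, ?_, fun h => hy0 ?_⟩
  · simpa [← mulVec_mulVec, dotProduct_mulVec, mulVec_transpose] using hy
  · refine funext (Fintype.linearIndependent_iff.1 hv y (Subtype.ext ?_))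
    rw [vecMul_eq_sum, mulVec_sum] at h
    simpa only [Submodule.coe_sum, Submodule.coe_smul, Submodule.coe_zero, ← hN,
      ← mulVec_smul] using h

theorem rank_add_rank_le_rank_mul_add_card {l m : Type*} [Finite l] [Fintype m]
    (A : Matrix l ι K) (C : Matrix ι m K) :
    A.rank + C.rank ≤ (A * C).rank + Fintype.card ι := by
  let g := A.mulVecLin.domRestrict (LinearMap.range C.mulVecLin)
  have hrange : LinearMap.range g = LinearMap.range (A * C).mulVecLin := by
    rw [LinearMap.range_domRestrict, mulVecLin_mul, LinearMap.range_comp]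
  have hker :
      Module.finrank K (LinearMap.ker g) ≤ Module.finrank K (LinearMap.ker A.mulVecLin) := by
    have hle : (LinearMap.ker g).map (Submodule.subtype _) ≤ LinearMap.ker A.mulVecLin := by
      rintro _ ⟨x, hx, rfl⟩
      exact hx
    rw [← Submodule.finrank_map_subtype_eq]
    exact Submodule.finrank_mono hle
  have hg := g.finrank_range_add_finrank_ker
  have hA := A.mulVecLin.finrank_range_add_finrank_ker
  rw [Module.finrank_fintype_fun_eq_card] at hA
  rw [hrange] at hg
  unfold Matrix.rank
  omega

end FiniteField

section LocalRing

variable {R ι m : Type*} [CommRing R] [Fintype ι]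

theorem dotProduct_add_transpose_mulVec (A : Matrix ι ι R) (x y : ι → R) :
    y ⬝ᵥ (A + Aᵀ) *ᵥ x = y ⬝ᵥ A *ᵥ x + x ⬝ᵥ A *ᵥ y := by
  rw [add_mulVec, dotProduct_add, mulVec_transpose, dotProduct_comm y (x ᵥ* A),
    ← dotProduct_mulVec]

theorem exists_dotProduct_mulVec_self_eq_of_isNilpotent_of_isUnit (A : Matrix ι ι R)
    {x y : ι → R} (hx : IsNilpotent (x ⬝ᵥ A *ᵥ x)) (hxy : IsUnit (y ⬝ᵥ (A + Aᵀ) *ᵥ x))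
    (a : R) : ∃ z, z ⬝ᵥ A *ᵥ z = a := by
  obtain ⟨t, ht⟩ := exists_quadratic_root hxy hx (y ⬝ᵥ A *ᵥ y - a)
  refine ⟨y + t • x, ?_⟩
  simp only [mulVec_add, mulVec_smul, dotProduct_add, add_dotProduct, smul_dotProduct,
    dotProduct_smul, smul_eq_mul]
  linear_combination ht - t * dotProduct_add_transpose_mulVec A x y

variable [IsLocalRing R]

theorem exists_dotProduct_mulVec_self_eq_of_three_le_rank [Finite R] (A : Matrix ι ι R)
    (hA : 3 ≤ ((A + Aᵀ).map (residue R)).rank) (a : R) : ∃ z, z ⬝ᵥ A *ᵥ z = a := by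
  classical
  have : Finite (ResidueField R) := .of_surjective _ residue_surjective
  obtain ⟨x', hx', hrad⟩ := exists_isotropic_of_three_le_rank (A.map (residue R))
    (by rwa [Matrix.map_add _ (map_add _), transpose_map] at hA)
  obtain ⟨x, rfl⟩ := residue_surjective.comp_left x'
  rw [← transpose_map, ← Matrix.map_add _ (map_add _)] at hrad
  obtain ⟨i, hi⟩ := Function.ne_iff.1 hrad
  refine exists_dotProduct_mulVec_self_eq_of_isNilpotent_of_isUnit A
    (x := x) (y := Pi.single i 1) ?_ ?_ a
  · rw [Ring.KrullDimLE.isNilpotent_iff_mem_maximalIdeal, ← residue_eq_zero_iff, ← hx',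
      RingHom.map_dotProduct]
    congr 1
    exact funext (RingHom.map_mulVec _ _ _)
  · rw [single_one_dotProduct, ← residue_ne_zero_iff_isUnit, RingHom.map_mulVec]
    exact hi

theorem linearIndependent_row_map_residue [IsArtinianRing R] {M : Matrix ι m R}
    (hM : Function.Injective M.vecMul) :
    LinearIndependent (ResidueField R) (M.map (residue R)).row := by
  -- Multiplying by `s` lifts a linear relation over the residue field to one over `R`.
  obtain ⟨s, hs0, hs⟩ := exists_ne_zero_forall_mem_maximalIdeal_mul_eq_zero R
  refine Fintype.linearIndependent_iff.2 fun c hc i => ?_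
  obtain ⟨c, rfl⟩ := residue_surjective.comp_left c
  have hmem (j : m) : (c ᵥ* M) j ∈ maximalIdeal R := by
    rw [← residue_eq_zero_iff, RingHom.map_vecMul, vecMul_eq_sum]
    exact congrFun hc j
  have hsc : s • c = 0 := hM <| by
    change (s • c) ᵥ* M = 0 ᵥ* M
    rw [smul_vecMul, zero_vecMul]
    exact funext fun j => hs _ (hmem j)
  by_contra hi
  exact hs0 <| ((residue_ne_zero_iff_isUnit _).1 hi).mul_left_eq_zero.1 (congrFun hsc i)

theorem exists_dotProduct_mulVec_self_eq_of_add_transpose_eq [Finite R] [Fintype m]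
    [DecidableEq m] {A : Matrix ι ι R} {M : Matrix ι m R} {D : Matrix m m R}
    (hA : A + Aᵀ = M * D * Mᵀ) (hM : Function.Injective M.vecMul) (hD : IsUnit D.det)
    (hcard : Fintype.card m + 3 ≤ 2 * Fintype.card ι) (a : R) : ∃ z, z ⬝ᵥ A *ᵥ z = a := by
  refine exists_dotProduct_mulVec_self_eq_of_three_le_rank A ?_ a
  have hrank : (M.map (residue R)).rank = Fintype.card ι :=
    (linearIndependent_row_map_residue hM).rank_matrix
  have hMD : (M.map (residue R) * D.map (residue R)).rank = Fintype.card ι := by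
    rw [rank_mul_eq_left_of_isUnit_det, hrank]
    exact (residue R).map_det D ▸ hD.map (residue R)
  have := rank_add_rank_le_rank_mul_add_card (M.map (residue R) * D.map (residue R))
    (M.map (residue R))ᵀ
  rw [rank_transpose, hrank, hMD] at this
  rw [hA, Matrix.map_mul, Matrix.map_mul, transpose_map]
  omega

end LocalRing

theorem exists_add_transpose_eq {R ι : Type*} [AddCommMonoid R] [LinearOrder ι]
    {G : Matrix ι ι R} (hG : G.IsSymm) (heven : ∀ i, Even (G i i)) :
    ∃ A : Matrix ι ι R, A + Aᵀ = G := by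
  choose h hh using heven
  refine ⟨of fun i j => if i < j then G i j else if i = j then h i else 0, ?_⟩
  ext i j
  rcases lt_trichotomy i j with hij | rfl | hij
  · simp [hij, hij.not_gt, hij.ne']
  · simp [hh]
  · simp [hij, hij.not_gt, hij.ne', hG.apply]

section Lattice

variable {n : ℕ}

/-- The Gram matrix of the form `B` in the standard basis, used to express `B` through Mathlib's
matrix operations and to reduce it modulo `p ^ k`. -/
def lorentzGram (n : ℕ) : Matrix (Fin (n + 1)) (Fin (n + 1)) ℤ :=
  diagonal (Fin.cons 1 fun _ => -1)

theorem lorentzGram_isSymm : (lorentzGram n).IsSymm := isSymm_diagonal _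

theorem isUnit_det_lorentzGram : IsUnit (lorentzGram n).det := by
  simp [lorentzGram, det_diagonal, Fin.prod_univ_succ, isUnit_one.neg.pow n]

theorem B_eq_dotProduct_mulVec (x y : Fin (n + 1) → ℤ) :
    B x y = x ⬝ᵥ lorentzGram n *ᵥ y := by
  simp [B, lorentzGram, dotProduct, mulVec_diagonal, Fin.sum_univ_succ, sub_eq_add_neg]

theorem smul_mem_En_iff {m : ℤ} (hm : m ≠ 0) {x : Fin (n + 1) → ℤ} :
    m • x ∈ En n ↔ x ∈ En n := by
  change B (m • x) (kv n) = 0 ↔ B x (kv n) = 0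
  rw [B_eq_dotProduct_mulVec, B_eq_dotProduct_mulVec, smul_dotProduct, smul_eq_zero_iff_right hm]

theorem even_B_self {x : Fin (n + 1) → ℤ} (hx : x ∈ En n) : Even (B x x) := by
  -- `kv n` is a characteristic vector, because its entries are odd.
  have hchar : Even (B x x - B x (kv n)) := by
    have hsub : B x x - B x (kv n) =
        x 0 * (x 0 + 3) - ∑ i : Fin n, x i.succ * (x i.succ - 1) := by
      simp only [B, kv, if_true, Fin.succ_ne_zero, if_false, mul_sub, Finset.sum_sub_distrib]
      ring
    rw [hsub]
    refine .sub ?_ (Finset.even_sum _ fun i _ => Int.even_mul_pred_self _)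
    rw [show x 0 * (x 0 + 3) = x 0 * (x 0 + 1) + 2 * x 0 by ring]
    exact (Int.even_mul_succ_self _).add (even_two_mul _)
  simpa [show B x (kv n) = 0 from hx] using hchar

theorem mem_mE_of_forall_dvd {m : ℕ} (hm : m ≠ 0) {x : En 10}
    (h : ∀ i, (m : ℤ) ∣ (x : Fin 11 → ℤ) i) : x ∈ mE m := by
  choose z hz using h
  have hx : (x : Fin 11 → ℤ) = (m : ℤ) • z := funext hz
  exact ⟨⟨z, (smul_mem_En_iff (mod_cast hm)).1 (hx ▸ x.2)⟩, Subtype.ext hx.symm⟩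

variable {ι : Type*} (w : ι → En n)

/-- The matrix whose rows are the standard coordinates of the vectors `w i` of `En n`, so that
integer combinations of the `w i` are the products `c ᵥ* coordMatrix w`. -/
def coordMatrix : Matrix ι (Fin (n + 1)) ℤ := of fun i => w i

theorem vecMul_coordMatrix [Fintype ι] (c : ι → ℤ) :
    c ᵥ* coordMatrix w = (∑ i, c i • w i : En n) := by
  rw [vecMul_eq_sum]
  ext j
  simp [coordMatrix]

theorem coordMatrix_mul_lorentzGram_mul_transpose_apply (i j : ι) :
    (coordMatrix w * lorentzGram n * (coordMatrix w)ᵀ) i j = B (w i).1 (w j).1 := by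
  rw [B_eq_dotProduct_mulVec, dotProduct_mulVec]
  rfl

theorem exists_add_transpose_eq_gram [LinearOrder ι] : ∃ A : Matrix ι ι ℤ,
    A + Aᵀ = coordMatrix w * lorentzGram n * (coordMatrix w)ᵀ := by
  refine exists_add_transpose_eq ?_ fun i => ?_
  · simp [IsSymm, lorentzGram_isSymm.eq, Matrix.mul_assoc]
  · rw [coordMatrix_mul_lorentzGram_mul_transpose_apply]
    exact even_B_self (w i).2

variable {w} in
theorem B_sum_smul_self [Fintype ι] {A : Matrix ι ι ℤ}
    (hA : A + Aᵀ = coordMatrix w * lorentzGram n * (coordMatrix w)ᵀ) (c : ι → ℤ) :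
    B (∑ i, c i • w i : En n).1 (∑ i, c i • w i : En n).1 = 2 * (c ⬝ᵥ A *ᵥ c) := by
  rw [two_mul, ← dotProduct_add_transpose_mulVec, hA, ← vecMul_coordMatrix,
    B_eq_dotProduct_mulVec, ← mulVec_mulVec, ← mulVec_mulVec, mulVec_transpose, dotProduct_mulVec c]

end Lattice

section Reduction

variable {ι : Type*} [Fintype ι] {m : ℕ} {f : (ι → ZMod m) →ₗ[ℤ] En 10 ⧸ mE m} {w : ι → En 10}

theorem mk_sum_smul [DecidableEq ι] (hw : ∀ i, Submodule.Quotient.mk (w i) = f (Pi.single i 1))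
    (c : ι → ℤ) : Submodule.Quotient.mk (∑ i, c i • w i) = f fun i => (c i : ZMod m) := by
  have hc : (fun i => (c i : ZMod m)) = ∑ i, c i • Pi.single i (1 : ZMod m) := by
    rw [← Finset.univ_sum_single fun i => (c i : ZMod m)]
    simp [← Pi.single_smul]
  rw [hc, map_sum, ← Submodule.mkQ_apply, map_sum]
  simp only [map_smul, Submodule.mkQ_apply, hw]

theorem injective_vecMul_coordMatrix_map (hm : m ≠ 0) (hf : Function.Injective f)
    (hw : ∀ c : ι → ℤ, Submodule.Quotient.mk (∑ i, c i • w i) = f fun i => (c i : ZMod m)) :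
    Function.Injective ((coordMatrix w).map (Int.castRingHom (ZMod m))).vecMul := by
  refine (injective_iff_map_eq_zero (vecMulLinear _)).2 fun c hc => ?_
  obtain ⟨c, rfl⟩ := ZMod.intCast_surjective.comp_left c
  refine hf ?_
  rw [map_zero]
  refine (hw c).symm.trans ((Submodule.Quotient.mk_eq_zero _).2 (mem_mE_of_forall_dvd hm ?_))
  intro j
  rw [← ZMod.intCast_zmod_eq_zero_iff_dvd, ← vecMul_coordMatrix]
  exact (RingHom.map_vecMul (Int.castRingHom (ZMod m)) _ _ _).trans (congrFun hc j)

end Reduction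

theorem represents_all_units_general {p k r : ℕ} (hp : p.Prime) (hk : k ≠ 0) (hr : 7 ≤ r)
    (f : (Fin r → ZMod (p ^ k)) →ₗ[ℤ] En 10 ⧸ mE (p ^ k)) (hf : Function.Injective f)
    (a : ZMod (p ^ k)) :
    ∃ x : En 10, Submodule.Quotient.mk x ∈ LinearMap.range f ∧
      ∃ t : ℤ, B (x : Fin 11 → ℤ) (x : Fin 11 → ℤ) = 2 * t ∧ (t : ZMod (p ^ k)) = a := by
  have := isLocalRing_zmod_prime_pow hp hk
  have : NeZero (p ^ k) := ⟨pow_ne_zero k hp.ne_zero⟩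
  let φ := Int.castRingHom (ZMod (p ^ k))
  choose w hw using fun i => Submodule.Quotient.mk_surjective _ (f (Pi.single i 1))
  have hmk := mk_sum_smul hw
  obtain ⟨A, hA⟩ := exists_add_transpose_eq_gram w
  have hAφ : A.map φ + (A.map φ)ᵀ =
      (coordMatrix w).map φ * (lorentzGram 10).map φ * ((coordMatrix w).map φ)ᵀ := by
    rw [← transpose_map, ← Matrix.map_add _ (map_add φ), hA, Matrix.map_mul, Matrix.map_mul,
      transpose_map]
  obtain ⟨z, hz⟩ := exists_dotProduct_mulVec_self_eq_of_add_transpose_eq hAφ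
    (injective_vecMul_coordMatrix_map (NeZero.ne _) hf hmk)
    (φ.map_det (lorentzGram 10) ▸ isUnit_det_lorentzGram.map φ)
    (by simp only [Fintype.card_fin]; omega) a
  obtain ⟨c, rfl⟩ := ZMod.intCast_surjective.comp_left z
  refine ⟨∑ i, c i • w i, ⟨_, (hmk c).symm⟩, c ⬝ᵥ A *ᵥ c, B_sum_smul_self hA c, ?_⟩
  change φ _ = a
  rw [← hz, RingHom.map_dotProduct]
  congr 1
  exact funext (RingHom.map_mulVec _ _ _)

/-- if `M ⊆ E₁₀/p^kE₁₀` contains a submodule isomorphic to `(ℤ/p^kℤ)^8`,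
then `M` represents all invertible elements of `ℤ/p^kℤ` via `x ↦ (1/2)⟨x,x⟩`. -/
theorem represents_all_units (p : ℕ) (hp : p.Prime) (k : ℕ) (hk : 1 ≤ k)
    (M : Submodule ℤ ((En 10) ⧸ mE (p ^ k)))
    (f : (Fin 8 → ZMod (p ^ k)) →ₗ[ℤ] (En 10) ⧸ mE (p ^ k))
    (hf : Function.Injective f)
    (hfM : LinearMap.range f ≤ M)
    (a : (ZMod (p ^ k))ˣ) :
    ∃ x : En 10, (Submodule.Quotient.mk x : (En 10) ⧸ mE (p ^ k)) ∈ M ∧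
      ∃ t : ℤ, B (x : Fin 11 → ℤ) (x : Fin 11 → ℤ) = 2 * t ∧
        (t : ZMod (p ^ k)) = (a : ZMod (p ^ k)) := by
  obtain ⟨x, hx, hxa⟩ :=
    represents_all_units_general hp (Nat.one_le_iff_ne_zero.1 hk) (by simp) f hf (a : ZMod (p ^ k))
  exact ⟨x, hfM hx, hxa⟩
end
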